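/- Let (α, μ) be a measure space, let m ≥ 1 be a natural number, set p = 2m, and let N₀ : Lp(μ; ℝ) → ℝ be given by N₀(f) = ∫ (f(x))^{2m} dμ(x). Then for every f ∈ Lp(μ; ℝ): (i) for every ξ ∈ Lp(μ; ℝ) the function x ↦ (f(x))^{2m−1} · ξ(x) is μ-integrable, (ii) the assignment ξ ↦ 2m · ∫ (f(x))^{2m−1} ξ(x) dμ(x) is a continuous linear functional on Lp(μ; ℝ), and (iii) N₀ is Fréchet differentiable at f with this functional as its derivative. -/

import Mathlib

open MeasureTheory ENNReal

section Helpers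

variable {α : Type*} [MeasurableSpace α] {μ : Measure α} {n : ℕ} {q : ℝ≥0∞}

lemma aux_lintegral (hn : n ≠ 0) (hq : q = n) (g : Fin n → Lp ℝ q μ) :
    ∫⁻ x, ‖∏ i, g i x‖ₑ ∂μ ≤ ∏ i, eLpNorm (g i) q μ := by
  have hn' : (n : ℝ) ≠ 0 := by exact_mod_cast hn
  have h := ENNReal.lintegral_prod_norm_pow_le (μ := μ) (Finset.univ : Finset (Fin n))
    (f := fun i x => ‖g i x‖ₑ ^ (n : ℝ)) (p := fun _ => (1 / n : ℝ))
    (fun i _ => ((Lp.aestronglyMeasurable (g i)).enorm.pow_const _))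
    (by simp [hn']) (fun i _ => by positivity)
  have hq0 : q ≠ 0 := by rw [hq]; exact_mod_cast hn
  have hqt : q ≠ ∞ := by rw [hq]; simp
  calc ∫⁻ x, ‖∏ i, g i x‖ₑ ∂μ
      = ∫⁻ x, ∏ i, (‖g i x‖ₑ ^ (n : ℝ)) ^ (1 / n : ℝ) ∂μ := by
        refine lintegral_congr fun x => ?_
        have e : ‖∏ i, g i x‖ₑ = ∏ i, ‖g i x‖ₑ := by
          simp only [enorm_eq_nnnorm, nnnorm_prod, ENNReal.ofNNReal_finsetProd]
        rw [e]
        refine Finset.prod_congr rfl fun i _ => ?_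
        rw [← ENNReal.rpow_mul, mul_one_div_cancel hn', ENNReal.rpow_one]
    _ ≤ _ := h
    _ = ∏ i, eLpNorm (g i) q μ := by
        refine Finset.prod_congr rfl fun i _ => ?_
        rw [eLpNorm_eq_lintegral_rpow_enorm_toReal hq0 hqt]
        simp [hq]

lemma aux_integrable (hn : n ≠ 0) (hq : q = n) (g : Fin n → Lp ℝ q μ) :
    Integrable (fun x => ∏ i, g i x) μ := by
  refine ⟨Finset.aestronglyMeasurable_fun_prod _ fun i _ => Lp.aestronglyMeasurable (g i), ?_⟩
  refine (aux_lintegral hn hq g).trans_lt ?_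
  exact ENNReal.prod_lt_top fun i _ => Lp.eLpNorm_lt_top (g i)

lemma aux_norm (hn : n ≠ 0) (hq : q = n) (g : Fin n → Lp ℝ q μ) :
    ‖∫ x, ∏ i, g i x ∂μ‖ ≤ 1 * ∏ i, ‖g i‖ := by
  rw [one_mul]
  refine (norm_integral_le_integral_norm _).trans ?_
  rw [integral_norm_eq_lintegral_enorm (aux_integrable hn hq g).1]
  refine (ENNReal.toReal_mono ?_ (aux_lintegral hn hq g)).trans_eq ?_
  · exact (ENNReal.prod_lt_top fun i _ => Lp.eLpNorm_lt_top (g i)).ne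
  · rw [ENNReal.toReal_prod]
    rfl

lemma aux_update [DecidableEq (Fin n)] (g : Fin n → Lp ℝ q μ) (i : Fin n) (y : Lp ℝ q μ) (x : α) :
    ∏ j, (Function.update g i y j) x = y x * ∏ j ∈ Finset.univ \ {i}, g j x := by
  have : (fun j => (Function.update g i y j) x)
      = Function.update (fun j => g j x) i (y x) := by
    funext j
    by_cases h : j = i
    · subst h; simp
    · simp [h]
  rw [this, Finset.prod_update_of_mem (Finset.mem_univ i)]

/-- The multilinear functional `P`. -/
noncomputable def auxP [Fact (1 ≤ q)] (hn : n ≠ 0) (hq : q = n) :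
    ContinuousMultilinearMap ℝ (fun _ : Fin n => Lp ℝ q μ) ℝ :=
  MultilinearMap.mkContinuous
    { toFun := fun g => ∫ x, ∏ i, g i x ∂μ
      map_update_add' := by
        intro _ g i a b
        rw [← integral_add (aux_integrable hn hq _) (aux_integrable hn hq _)]
        refine integral_congr_ae ?_
        filter_upwards [Lp.coeFn_add a b] with x hx
        simp only [aux_update, hx, Pi.add_apply, add_mul]
      map_update_smul' := by
        intro _ g i c a
        rw [smul_eq_mul, ← integral_const_mul]
        refine integral_congr_ae ?_
        filter_upwards [Lp.coeFn_smul c a] with x hx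
        simp only [aux_update, hx, Pi.smul_apply, smul_eq_mul, mul_assoc] }
    1 (aux_norm hn hq)

lemma auxP_apply [Fact (1 ≤ q)] (hn : n ≠ 0) (hq : q = n) (g : Fin n → Lp ℝ q μ) :
    auxP hn hq g = ∫ x, ∏ i, g i x ∂μ := rfl

lemma aux_update_const (f ξ : Lp ℝ q μ) (i : Fin n) (x : α) :
    ∏ j, (Function.update (fun _ : Fin n => f) i ξ j) x = f x ^ (n - 1) * ξ x := by
  rw [aux_update, Finset.prod_const, Finset.card_sdiff_of_subset (Finset.subset_univ _)]
  simp [mul_comm]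

end Helpers



/-- For `p = 2m` and `N₀(f) = ∫ (f x)^(2m) dμ` on `Lᵖ(μ; ℝ)`:
(i) for every `ξ ∈ Lᵖ` the function `x ↦ (f x)^(2m-1) * ξ x` is integrable,
(ii) `ξ ↦ 2m ∫ f^(2m-1) ξ dμ` is a continuous linear functional, and
(iii) `N₀` is Fréchet differentiable at `f` with this functional as derivative. -/
theorem stmt_4 {α : Type*} [MeasurableSpace α] (μ : Measure α)
    (m : ℕ) (hm : 1 ≤ m) [Fact (1 ≤ (2 * m : ℝ≥0∞))]
    (f : Lp ℝ (2 * m : ℝ≥0∞) μ) :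
    (∀ ξ : Lp ℝ (2 * m : ℝ≥0∞) μ,
        Integrable (fun x => (f x) ^ (2 * m - 1) * ξ x) μ) ∧
    ∃ L : Lp ℝ (2 * m : ℝ≥0∞) μ →L[ℝ] ℝ,
      (∀ ξ : Lp ℝ (2 * m : ℝ≥0∞) μ,
          L ξ = (2 * m : ℝ) * ∫ x, (f x) ^ (2 * m - 1) * ξ x ∂μ) ∧
      HasFDerivAt (fun g : Lp ℝ (2 * m : ℝ≥0∞) μ => ∫ x, (g x) ^ (2 * m) ∂μ) L f := by
  have hn : 2 * m ≠ 0 := by omega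
  have hq : (2 * m : ℝ≥0∞) = ((2 * m : ℕ) : ℝ≥0∞) := by push_cast; rfl
  refine ⟨fun ξ => ?_, ∑ i : Fin (2 * m),
    ((auxP hn hq).toContinuousLinearMap (fun _ => f) i) ∘L (ContinuousLinearMap.id ℝ _),
    fun ξ => ?_, ?_⟩
  · have h := aux_integrable hn hq (Function.update (fun _ : Fin (2 * m) => f) ⟨0, by omega⟩ ξ)
    simpa only [aux_update_const] using h
  · simp only [ContinuousLinearMap.comp_id, sum_apply,
      ContinuousMultilinearMap.toContinuousLinearMap_apply, auxP_apply, aux_update_const]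
    simp
  · have h := HasFDerivAt.multilinear_comp (auxP (μ := μ) hn hq)
      (g := fun _ g => g) (fun _ => hasFDerivAt_id (𝕜 := ℝ) f)
    simpa only [auxP_apply, Finset.prod_const, Finset.card_univ, Fintype.card_fin] using h
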